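/- With the setup of the context: (i) ‖ρ(ϑ)‖_H = 4·|T|, and for every τ' ∈ 𝔸_q for which there exist F', α' ∈ 𝔸_q with F∘F' = F'∘F = 1 + α'∘τ' and H̃ = F'∘G + τ', one has ‖ρ(τ')‖_H ≥ ‖ρ(ϑ)‖_H; (ii) for every such τ', moreover ‖ρ(F∘τ')‖_H ≥ ‖ρ(F∘ϑ)‖_H. -/

import Mathlib

noncomputable section

open MvPolynomial Quaternion

/-- The ring `R'_q = (ℤ/qℤ)[x,y]/⟨x^n - 1, y^n - 1⟩`. -/
abbrev Rq (q n : ℕ) : Type :=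
  MvPolynomial (Fin 2) (ZMod q) ⧸
    (Ideal.span {(X 0 : MvPolynomial (Fin 2) (ZMod q)) ^ n - 1, (X 1 : MvPolynomial (Fin 2) (ZMod q)) ^ n - 1})

/-- Evaluation `ev_{a,b} : R'_q → ℤ/qℤ` at a point `(a,b)` with `a^n = b^n = 1`. -/
def ev (q n : ℕ) (a b : ZMod q) (ha : a ^ n = 1) (hb : b ^ n = 1) :
    Rq q n →+* ZMod q :=
  Ideal.Quotient.lift _ (MvPolynomial.eval ![a, b])
    (by
      intro f hf
      rw [← RingHom.mem_ker]
      refine Ideal.span_le.mpr ?_ hf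
      rintro p hp
      rcases hp with rfl | rfl <;>
        simp [RingHom.mem_ker, ha, hb])

/-- The Lagrange interpolant `λ_{a,b} ∈ R'_q`. -/
def lag (q n : ℕ) (a b : ZMod q) : Rq q n :=
  Ideal.Quotient.mk _ (MvPolynomial.C (((n : ZMod q) ^ 2)⁻¹) *
    ∑ i ∈ Finset.range n, ∑ j ∈ Finset.range n,
      MvPolynomial.C (a⁻¹ ^ i * b⁻¹ ^ j) * (X 0 ^ i * X 1 ^ j))

/-- The set `E` of points `(a,b)` with `a^n = b^n = 1`, as a finset. -/
def Efin (q n : ℕ) [NeZero q] : Finset (ZMod q × ZMod q) :=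
  Finset.univ.filter fun p => p.1 ^ n = 1 ∧ p.2 ^ n = 1

/-- Evaluation at an arbitrary point of `(ℤ/qℤ)²` (zero outside `E`). -/
def evAt (q n : ℕ) (p : ZMod q × ZMod q) (f : Rq q n) : ZMod q :=
  if h : p.1 ^ n = 1 ∧ p.2 ^ n = 1 then ev q n p.1 p.2 h.1 h.2 f else 0

/-- Componentwise evaluation of a quaternion of `𝔸_q` at a point of `E`. -/
def qevAt (q n : ℕ) (p : ZMod q × ZMod q) (F : ℍ[Rq q n, 1, 1]) : ℍ[ZMod q, 1, 1] :=
  ⟨evAt q n p F.re, evAt q n p F.imI, evAt q n p F.imJ, evAt q n p F.imK⟩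

/-- The central (scalar) quaternion attached to `s ∈ R'_q`. -/
def cen (q n : ℕ) (s : Rq q n) : ℍ[Rq q n, 1, 1] :=
  algebraMap (Rq q n) ℍ[Rq q n, 1, 1] s

/-- A quaternion over `ℤ/qℤ` regarded as a constant quaternion of `𝔸_q`. -/
def constQ (q n : ℕ) (w : ℍ[ZMod q, 1, 1]) : ℍ[Rq q n, 1, 1] :=
  ⟨Ideal.Quotient.mk _ (MvPolynomial.C w.re), Ideal.Quotient.mk _ (MvPolynomial.C w.imI),
   Ideal.Quotient.mk _ (MvPolynomial.C w.imJ), Ideal.Quotient.mk _ (MvPolynomial.C w.imK)⟩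

/-- The Hamming weight of `ρ(F)`: the number of nonzero components, over all points of `E`,
among the four quaternion components of the evaluation of `F`. -/
def hw (q n : ℕ) [NeZero q] (F : ℍ[Rq q n, 1, 1]) : ℕ :=
  ∑ p ∈ Efin q n,
    ((if (qevAt q n p F).re ≠ 0 then 1 else 0) +
     (if (qevAt q n p F).imI ≠ 0 then 1 else 0) +
     (if (qevAt q n p F).imJ ≠ 0 then 1 else 0) +
     (if (qevAt q n p F).imK ≠ 0 then 1 else 0))
lemma mem_Efin {q n : ℕ} [NeZero q] {p : ZMod q × ZMod q} :
    p ∈ Efin q n ↔ p.1 ^ n = 1 ∧ p.2 ^ n = 1 := by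
  simp [Efin]

/-- A sum of powers of an `n`-th root of unity in a field. -/
lemma sum_range_pow_of_pow_eq_one {K : Type*} [Field K] [DecidableEq K] {n : ℕ} {z : K}
    (hz : z ^ n = 1) : ∑ i ∈ Finset.range n, z ^ i = if z = 1 then (n : K) else 0 := by
  split_ifs with h
  · simp [h]
  · rw [geom_sum_eq h, hz, sub_self, zero_div]

lemma natCast_ne_zero_of_dvd_sub_one {q n : ℕ} (hq : q.Prime) (hn : n ∣ q - 1) (hnpos : 0 < n) :
    (n : ZMod q) ≠ 0 := by
  rw [Ne, ZMod.natCast_eq_zero_iff]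
  intro h
  have h₁ := Nat.le_of_dvd hnpos h
  have h₂ := Nat.le_of_dvd (Nat.sub_pos_of_lt hq.one_lt) hn
  have := hq.one_lt
  omega

@[simp]
lemma ev_mk (q n : ℕ) (a b : ZMod q) (ha : a ^ n = 1) (hb : b ^ n = 1)
    (f : MvPolynomial (Fin 2) (ZMod q)) :
    ev q n a b ha hb (Ideal.Quotient.mk _ f) = MvPolynomial.eval ![a, b] f :=
  rfl

lemma ev_smul (q n : ℕ) (a b : ZMod q) (ha : a ^ n = 1) (hb : b ^ n = 1) (c : ZMod q)
    (f : Rq q n) : ev q n a b ha hb (c • f) = c * ev q n a b ha hb f := by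
  obtain ⟨f, rfl⟩ := Ideal.Quotient.mk_surjective f
  exact MvPolynomial.smul_eval _ _ _

/-- The Lagrange interpolant at a point of `E` is the indicator of that point on `E`. -/
lemma ev_lag {q n : ℕ} [Fact q.Prime] (hn : n ∣ q - 1) (hnpos : 0 < n) {p r : ZMod q × ZMod q}
    (hp : p.1 ^ n = 1 ∧ p.2 ^ n = 1) (hr : r.1 ^ n = 1 ∧ r.2 ^ n = 1) :
    ev q n p.1 p.2 hp.1 hp.2 (lag q n r.1 r.2) = if r = p then 1 else 0 := by
  have hn₀ := natCast_ne_zero_of_dvd_sub_one (Fact.out : q.Prime) hn hnpos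
  have hr₁ : r.1 ≠ 0 := ne_zero_pow hnpos.ne' (hr.1 ▸ one_ne_zero)
  have hr₂ : r.2 ≠ 0 := ne_zero_pow hnpos.ne' (hr.2 ▸ one_ne_zero)
  have key : ev q n p.1 p.2 hp.1 hp.2 (lag q n r.1 r.2) = ((n : ZMod q) ^ 2)⁻¹ *
      ((∑ i ∈ Finset.range n, (r.1⁻¹ * p.1) ^ i) * ∑ j ∈ Finset.range n, (r.2⁻¹ * p.2) ^ j) := by
    simp only [lag, ev_mk, map_mul, map_sum, map_pow, eval_C, eval_X, Finset.sum_mul_sum,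
      Matrix.cons_val_zero, Matrix.cons_val_one]
    congr 1
    refine Finset.sum_congr rfl fun i _ => Finset.sum_congr rfl fun j _ => ?_
    ring
  rw [key, sum_range_pow_of_pow_eq_one (by simp [mul_pow, hp, hr]),
    sum_range_pow_of_pow_eq_one (by simp [mul_pow, hp, hr])]
  simp only [inv_mul_eq_one₀ hr₁, inv_mul_eq_one₀ hr₂, Prod.ext_iff]
  by_cases h₁ : r.1 = p.1 <;> by_cases h₂ : r.2 = p.2 <;> simp [h₁, h₂]
  field_simp

lemma ev_sum_smul_lag {q n : ℕ} [Fact q.Prime] (hn : n ∣ q - 1) (hnpos : 0 < n)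
    {T : Finset (ZMod q × ZMod q)} (hT : T ⊆ Efin q n) (c : ZMod q × ZMod q → ZMod q)
    {p : ZMod q × ZMod q} (hp : p.1 ^ n = 1 ∧ p.2 ^ n = 1) :
    ev q n p.1 p.2 hp.1 hp.2 (∑ r ∈ T, c r • lag q n r.1 r.2) = if p ∈ T then c p else 0 := by
  rw [map_sum, ← Finset.sum_ite_eq' T p c]
  refine Finset.sum_congr rfl fun r hr => ?_
  rw [ev_smul, ev_lag hn hnpos hp (mem_Efin.mp (hT hr)), mul_ite, mul_one, mul_zero]

lemma evAt_eq_ev {q n : ℕ} {p : ZMod q × ZMod q} (hp : p.1 ^ n = 1 ∧ p.2 ^ n = 1) (f : Rq q n) :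
    evAt q n p f = ev q n p.1 p.2 hp.1 hp.2 f :=
  dif_pos hp

lemma qevAt_add {q n : ℕ} {p : ZMod q × ZMod q} (hp : p.1 ^ n = 1 ∧ p.2 ^ n = 1)
    (A B : ℍ[Rq q n, 1, 1]) : qevAt q n p (A + B) = qevAt q n p A + qevAt q n p B := by
  ext <;> simp [qevAt, evAt_eq_ev hp]

lemma qevAt_mul {q n : ℕ} {p : ZMod q × ZMod q} (hp : p.1 ^ n = 1 ∧ p.2 ^ n = 1)
    (A B : ℍ[Rq q n, 1, 1]) : qevAt q n p (A * B) = qevAt q n p A * qevAt q n p B := by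
  ext <;> simp [qevAt, evAt_eq_ev hp]

lemma qevAt_cen {q n : ℕ} {p : ZMod q × ZMod q} (hp : p.1 ^ n = 1 ∧ p.2 ^ n = 1) (s : Rq q n) :
    qevAt q n p (cen q n s) = algebraMap _ _ (ev q n p.1 p.2 hp.1 hp.2 s) := by
  ext <;> simp [qevAt, cen, evAt_eq_ev hp, QuaternionAlgebra.algebraMap_eq]

lemma qevAt_constQ {q n : ℕ} {p : ZMod q × ZMod q} (hp : p.1 ^ n = 1 ∧ p.2 ^ n = 1)
    (W : ℍ[ZMod q, 1, 1]) : qevAt q n p (constQ q n W) = W := by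
  ext <;> simp [qevAt, constQ, evAt_eq_ev hp]

/-- If at every point of `E` the value of `A` is zero or agrees with that of `B`, then the weight
of `A` is at most that of `B`. -/
lemma hw_le_hw {q n : ℕ} [NeZero q] {A B : ℍ[Rq q n, 1, 1]}
    (h : ∀ p ∈ Efin q n, qevAt q n p A = 0 ∨ qevAt q n p A = qevAt q n p B) :
    hw q n A ≤ hw q n B := by
  refine Finset.sum_le_sum fun p hp => ?_
  rcases h p hp with h | h
  · simp [h]
  · rw [h]

/-- With the BQTRU setup: (i) `‖ρ(ϑ)‖_H = 4·|T|`, and every `τ'` admitting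
`F', α'` with `F∘F' = F'∘F = 1 + α'∘τ'` and `H̃ = F'∘G + τ'` satisfies
`‖ρ(τ')‖_H ≥ ‖ρ(ϑ)‖_H`; (ii) moreover `‖ρ(F∘τ')‖_H ≥ ‖ρ(F∘ϑ)‖_H` for every such `τ'`. -/
theorem stmt5 (q n : ℕ) [Fact q.Prime] (hn : n ∣ q - 1) (hnpos : 0 < n)
    (T : Finset (ZMod q × ZMod q)) (hT : T ⊆ Efin q n)
    (c : ZMod q × ZMod q → ZMod q) (hc : ∀ p ∈ T, c p ≠ 0)
    (σ : Rq q n) (hσ : σ = ∑ p ∈ T, c p • lag q n p.1 p.2)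
    (W : ℍ[ZMod q, 1, 1])
    (hW : W.re ≠ 0 ∧ W.imI ≠ 0 ∧ W.imJ ≠ 0 ∧ W.imK ≠ 0)
    (ϑ : ℍ[Rq q n, 1, 1]) (hϑ : ϑ = constQ q n W * cen q n σ)
    (F Finv α G : ℍ[Rq q n, 1, 1])
    (hFinv1 : F * Finv = 1 + α * cen q n σ)
    (hFinv2 : Finv * F = 1 + α * cen q n σ)
    (hG : ∀ p ∈ T, qevAt q n p G = 0)
    (H : ℍ[Rq q n, 1, 1]) (hH : H = Finv * G + ϑ) :
    (hw q n ϑ = 4 * T.card ∧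
      ∀ τ' F' α' : ℍ[Rq q n, 1, 1],
        F * F' = 1 + α' * τ' → F' * F = 1 + α' * τ' → H = F' * G + τ' →
        hw q n ϑ ≤ hw q n τ') ∧
    (∀ τ' F' α' : ℍ[Rq q n, 1, 1],
        F * F' = 1 + α' * τ' → F' * F = 1 + α' * τ' → H = F' * G + τ' →
        hw q n (F * ϑ) ≤ hw q n (F * τ')) := by
  have hϑp : ∀ p ∈ Efin q n, qevAt q n p ϑ = (if p ∈ T then c p else 0) • W := by
    intro p hp
    have hp' := mem_Efin.mp hp
    rw [hϑ, qevAt_mul hp', qevAt_constQ hp', qevAt_cen hp', hσ, ev_sum_smul_lag hn hnpos hT c hp',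
      ← Algebra.commutes, ← Algebra.smul_def]
  have hoff : ∀ p ∈ Efin q n, p ∉ T → qevAt q n p ϑ = 0 := fun p hp hpT => by
    rw [hϑp p hp, if_neg hpT, zero_smul]
  have hon : ∀ τ' F' : ℍ[Rq q n, 1, 1], H = F' * G + τ' → ∀ p ∈ T,
      qevAt q n p ϑ = qevAt q n p τ' := by
    intro τ' F' hτ p hpT
    have hp' := mem_Efin.mp (hT hpT)
    have h := congrArg (qevAt q n p) (hH.symm.trans hτ)
    simpa [qevAt_add hp', qevAt_mul hp', hG p hpT] using h
  refine ⟨⟨?_, fun τ' F' _ _ _ hτ => hw_le_hw fun p hp => ?_⟩,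
    fun τ' F' _ _ _ hτ => hw_le_hw fun p hp => ?_⟩
  · obtain ⟨h₀, h₁, h₂, h₃⟩ := hW
    have hterm : hw q n ϑ = ∑ p ∈ Efin q n, if p ∈ T then 4 else 0 := by
      refine Finset.sum_congr rfl fun p hp => ?_
      by_cases hpT : p ∈ T
      · simp [hϑp p hp, hpT, hc p hpT, h₀, h₁, h₂, h₃]
      · simp [hoff p hp hpT, hpT]
    rw [hterm, ← Finset.sum_filter, Finset.filter_mem_eq_inter, Finset.inter_eq_right.mpr hT,
      Finset.sum_const, smul_eq_mul, mul_comm]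
  · by_cases hpT : p ∈ T
    · exact Or.inr (hon τ' F' hτ p hpT)
    · exact Or.inl (hoff p hp hpT)
  · have hp' := mem_Efin.mp hp
    rw [qevAt_mul hp', qevAt_mul hp']
    by_cases hpT : p ∈ T
    · exact Or.inr (by rw [hon τ' F' hτ p hpT])
    · exact Or.inl (by rw [hoff p hp hpT, mul_zero])
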